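/- arXiv:1510.08313 — 7 statements merged into one kernel-verified Lean document; each statement's English description precedes it below -/
import Mathlib

section
/- Let n ≥ 1 be an integer, p > 2, a ∈ (0,1), T = (n^{p−1}p)^{−1} and ϱ₀ = (min{ap/(n(p−2)) + 1, 2})^{(p−1)/p}. Then h is a classical subsolution of the p-parabolic equation: for every (x,t) ∈ ℝ^n × ℝ with 1 < |x| < ϱ₀, 0 < t < T and 1 − ((p−2)/p^{p/(p−1)})·(|x|^{p/(p−1)} − 1)/t^{1/(p−1)} > 0, one has ∂_t h(x,t) ≤ Δ_p h(x,t). -/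
open Real Filter Set

noncomputable def spatialGrad {n : ℕ} (u : EuclideanSpace ℝ (Fin n) → ℝ → ℝ)
    (x : EuclideanSpace ℝ (Fin n)) (t : ℝ) : EuclideanSpace ℝ (Fin n) :=
  gradient (fun y => u y t) x

noncomputable def pFlux (p : ℝ) {n : ℕ} (u : EuclideanSpace ℝ (Fin n) → ℝ → ℝ)
    (x : EuclideanSpace ℝ (Fin n)) (t : ℝ) : EuclideanSpace ℝ (Fin n) :=
  ‖spatialGrad u x t‖ ^ (p - 2) • spatialGrad u x t

/-- The `p`-Laplacian in space: the divergence (trace of the spatial Fréchet derivative)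
of the vector field `y ↦ |∇u(y,t)|^(p-2) ∇u(y,t)`. -/
noncomputable def pLaplacian (p : ℝ) {n : ℕ} (u : EuclideanSpace ℝ (Fin n) → ℝ → ℝ)
    (x : EuclideanSpace ℝ (Fin n)) (t : ℝ) : ℝ :=
  LinearMap.trace ℝ (EuclideanSpace ℝ (Fin n))
    (fderiv ℝ (fun y => pFlux p u y t) x).toLinearMap

/-- `u` satisfies the `p`-parabolic equation classically at `(x,t)`. -/
def IsClassicalPParabolicAt (p : ℝ) {n : ℕ} (u : EuclideanSpace ℝ (Fin n) → ℝ → ℝ)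
    (x : EuclideanSpace ℝ (Fin n)) (t : ℝ) : Prop :=
  DifferentiableAt ℝ (fun s => u x s) t ∧
  DifferentiableAt ℝ (fun y => u y t) x ∧
  DifferentiableAt ℝ (fun y => pFlux p u y t) x ∧
  deriv (fun s => u x s) t = pLaplacian p u x t

noncomputable def gbar (p r t : ℝ) : ℝ :=
  (max 0 (1 - (p - 2) / p ^ (p / (p - 1)) * ((r ^ (p / (p - 1)) - 1) / t ^ (1 / (p - 1)))))
    ^ ((p - 1) / (p - 2))

noncomputable def hbar (p ϱ : ℝ) {n : ℕ} (x : EuclideanSpace ℝ (Fin n)) (t : ℝ) : ℝ :=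
  gbar p ‖x‖ t - gbar p ϱ t

noncomputable def htilde (H T k : ℝ) {n : ℕ} (x : EuclideanSpace ℝ (Fin n)) (t : ℝ) : ℝ :=
  H * Real.exp 2 * (1 - Real.exp ((t - T) / T - (‖x‖ - 1) / k))


/-- the bracket -/
noncomputable def brk (p r t : ℝ) : ℝ :=
  1 - (p - 2) / p ^ (p / (p - 1)) * ((r ^ (p / (p - 1)) - 1) / t ^ (1 / (p - 1)))

lemma brk_hasDerivAt_r (p r t : ℝ) (hp : 2 < p) (hr : 0 < r) (ht : 0 < t)
    (hB : 0 < brk p r t) :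
    HasDerivAt (fun s => brk p s t ^ ((p - 1) / (p - 2)))
      (-((p * t) ^ (-(1 / (p - 1))) * r ^ (1 / (p - 1)) * brk p r t ^ (1 / (p - 2)))) r := by
  have h1 : HasDerivAt (fun s => brk p s t)
      (-((p - 2) / p ^ (p / (p - 1)) * (((p / (p - 1)) * r ^ (p / (p - 1) - 1)) / t ^ (1 / (p - 1))))) r := by
    have := (((Real.hasDerivAt_rpow_const (x := r) (p := p / (p - 1)) (Or.inl hr.ne')).sub_const
      1).div_const (t ^ (1 / (p - 1)))).const_mul ((p - 2) / p ^ (p / (p - 1)))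
    exact this.const_sub 1
  have h2 := h1.rpow_const (p := (p - 1) / (p - 2)) (Or.inl hB.ne')
  refine h2.congr_deriv ?_
  symm
  have e1 : p / (p - 1) - 1 = 1 / (p - 1) := by
    have : p - 1 ≠ 0 := by linarith
    field_simp; ring
  have e2 : (p - 1) / (p - 2) - 1 = 1 / (p - 2) := by
    have : p - 2 ≠ 0 := by linarith
    field_simp; ring
  have e3 : p ^ (p / (p - 1)) = p * p ^ (1 / (p - 1)) := by
    rw [← e1, Real.rpow_sub_one (by linarith)]
    field_simp
  have e4 : (p * t) ^ (-(1 / (p - 1))) = (p ^ (1 / (p - 1)))⁻¹ * (t ^ (1 / (p - 1)))⁻¹ := by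
    rw [Real.rpow_neg (by positivity), Real.mul_rpow (by linarith) ht.le, mul_inv]
  rw [e1, e2, e3, e4]
  have : p - 1 ≠ 0 := by linarith
  have : p - 2 ≠ 0 := by linarith
  have : 0 < p ^ (1 / (p - 1)) := by positivity
  have : 0 < t ^ (1 / (p - 1)) := by positivity
  field_simp

lemma brk_hasDerivAt_t (p r t : ℝ) (hp : 2 < p) (ht : 0 < t)
    (hB : 0 < brk p r t) :
    HasDerivAt (fun s => brk p r s ^ ((p - 1) / (p - 2)))
      (brk p r t ^ (1 / (p - 2)) * (r ^ (p / (p - 1)) - 1) *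
        ((p * t)⁻¹ * (p * t) ^ (-(1 / (p - 1))))) t := by
  have h1 : HasDerivAt (fun s => brk p r s)
      ((p - 2) / p ^ (p / (p - 1)) * (r ^ (p / (p - 1)) - 1) *
        ((1 / (p - 1)) * t ^ (-(1 / (p - 1)) - 1))) t := by
    have := ((Real.hasDerivAt_rpow_const (x := t) (p := -(1 / (p - 1)))
      (Or.inl ht.ne')).const_mul ((p - 2) / p ^ (p / (p - 1)) * (r ^ (p / (p - 1)) - 1))).const_sub 1
    have h := this.congr_of_eventuallyEq (f₁ := fun s => brk p r s) (by
      filter_upwards [lt_mem_nhds ht] with s hs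
      simp only [brk]
      rw [Real.rpow_neg hs.le]; ring)
    exact h.congr_deriv (by ring)
  have h2 := h1.rpow_const (p := (p - 1) / (p - 2)) (Or.inl hB.ne')
  refine h2.congr_deriv ?_
  symm
  have e1 : p / (p - 1) - 1 = 1 / (p - 1) := by
    have : p - 1 ≠ 0 := by linarith
    field_simp; ring
  have e2 : (p - 1) / (p - 2) - 1 = 1 / (p - 2) := by
    have : p - 2 ≠ 0 := by linarith
    field_simp; ring
  have e3 : p ^ (p / (p - 1)) = p * p ^ (1 / (p - 1)) := by
    rw [← e1, Real.rpow_sub_one (by linarith)]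
    field_simp
  have e4 : (p * t) ^ (-(1 / (p - 1))) = (p ^ (1 / (p - 1)))⁻¹ * (t ^ (1 / (p - 1)))⁻¹ := by
    rw [Real.rpow_neg (by positivity), Real.mul_rpow (by linarith) ht.le, mul_inv]
  have e5 : t ^ (-(1 / (p - 1)) - 1) = (t ^ (1 / (p - 1)))⁻¹ / t := by
    rw [Real.rpow_sub_one ht.ne', Real.rpow_neg ht.le]
  rw [e2, e3, e4, e5]
  have : p - 1 ≠ 0 := by linarith
  have : p - 2 ≠ 0 := by linarith
  have : 0 < p ^ (1 / (p - 1)) := by positivity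
  have : 0 < t ^ (1 / (p - 1)) := by positivity
  field_simp

lemma gbar_eq (p r t : ℝ) (hB : 0 < brk p r t) :
    gbar p r t = brk p r t ^ ((p - 1) / (p - 2)) := by
  unfold gbar
  rw [max_eq_right]; · rfl
  exact hB.le

lemma gbar_mono (p r : ℝ) (hp : 2 < p) (hr : 1 ≤ r) :
    MonotoneOn (fun s => gbar p r s) (Set.Ioi 0) := by
  intro s hs s' hs' h
  have hs : 0 < s := hs
  have hs' : 0 < s' := hs'
  have h0 : 0 ≤ r ^ (p / (p - 1)) - 1 := by
    have := Real.one_le_rpow (z := p / (p - 1)) hr (div_nonneg (by linarith) (by linarith))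
    linarith
  have h1 : s ^ (1 / (p - 1)) ≤ s' ^ (1 / (p - 1)) :=
    Real.rpow_le_rpow hs.le h (div_nonneg (by linarith) (by linarith))
  have h2 : 0 < s ^ (1 / (p - 1)) := by positivity
  have h3 : 0 ≤ (p - 2) / p ^ (p / (p - 1)) :=
    div_nonneg (by linarith) (Real.rpow_nonneg (by linarith) _)
  simp only [gbar]
  apply Real.rpow_le_rpow (le_max_left _ _) _ (div_nonneg (by linarith) (by linarith))
  gcongr

lemma hasFDerivAt_norm' {n : ℕ} (x : EuclideanSpace ℝ (Fin n)) (hx : x ≠ 0) :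
    HasFDerivAt (fun y : EuclideanSpace ℝ (Fin n) => ‖y‖) (‖x‖⁻¹ • innerSL ℝ x) x := by
  have h := (hasStrictFDerivAt_norm_sq x).hasFDerivAt.sqrt (by simpa using hx)
  have : (fun y : EuclideanSpace ℝ (Fin n) => √(‖y‖ ^ 2)) = fun y => ‖y‖ := by
    funext y; exact Real.sqrt_sq (norm_nonneg y)
  rw [this] at h
  refine h.congr_fderiv ?_
  rw [Real.sqrt_sq (norm_nonneg x)]
  ext v
  have : ‖x‖ ≠ 0 := by simpa using hx
  simp
  field_simp

lemma radial_fderiv {n : ℕ} (f : ℝ → ℝ) (f' : ℝ) (x : EuclideanSpace ℝ (Fin n)) (hx : x ≠ 0)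
    (hf : HasDerivAt f f' ‖x‖) :
    HasFDerivAt (fun y : EuclideanSpace ℝ (Fin n) => f ‖y‖) ((f' * ‖x‖⁻¹) • innerSL ℝ x) x := by
  have := hf.comp_hasFDerivAt x (hasFDerivAt_norm' x hx)
  rwa [smul_smul] at this

lemma ev_good {n : ℕ} (p t : ℝ) (hp : 2 < p) (x : EuclideanSpace ℝ (Fin n)) (hx : x ≠ 0)
    (hB : 0 < brk p ‖x‖ t) : ∀ᶠ y in nhds x, y ≠ 0 ∧ 0 < brk p ‖y‖ t := by
  have hc : ContinuousAt (fun y : EuclideanSpace ℝ (Fin n) => brk p ‖y‖ t) x := by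
    have : ContinuousAt (fun y : EuclideanSpace ℝ (Fin n) => ‖y‖ ^ (p / (p - 1))) x :=
      (continuous_norm.continuousAt).rpow_const (Or.inl (by simpa using hx))
    unfold brk
    fun_prop
  exact (eventually_ne_nhds hx).and (hc.eventually (lt_mem_nhds hB))

lemma flux_eq {n : ℕ} (p t ϱ : ℝ) (hp : 2 < p) (ht : 0 < t) (x : EuclideanSpace ℝ (Fin n))
    (hx : x ≠ 0) (hB : 0 < brk p ‖x‖ t) :
    pFlux p (fun y s => hbar p ϱ y s) x t =
      (-(p * t)⁻¹ * brk p ‖x‖ t ^ ((p - 1) / (p - 2))) • x := by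
  have hr : 0 < ‖x‖ := by simpa using hx
  have hd := (radial_fderiv _ _ x hx (brk_hasDerivAt_r p ‖x‖ t hp hr ht hB)).sub_const
    (gbar p ϱ t)
  have hd2 := hd.congr_of_eventuallyEq (f₁ := fun y => hbar p ϱ y t) (by
    filter_upwards [ev_good p t hp x hx hB] with y hy
    simp only [hbar]
    rw [gbar_eq _ _ _ hy.2])
  set K := (p * t) ^ (-(1 / (p - 1))) with hK
  set b := brk p ‖x‖ t with hb
  set A := K * ‖x‖ ^ (1 / (p - 1)) * b ^ (1 / (p - 2)) with hA
  have hpt : 0 < p * t := by positivity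
  have hA0 : 0 < A := by positivity
  have hg : spatialGrad (fun y s => hbar p ϱ y s) x t = (-A * ‖x‖⁻¹) • x := by
    have : HasGradientAt (fun y => hbar p ϱ y t) ((-A * ‖x‖⁻¹) • x) x := by
      rw [hasGradientAt_iff_hasFDerivAt]
      refine hd2.congr_fderiv ?_
      ext v
      simp [inner_smul_left]
    exact this.gradient
  have hn : ‖(-A * ‖x‖⁻¹) • x‖ = A := by
    rw [norm_smul, norm_mul, norm_neg, norm_inv, norm_norm, Real.norm_of_nonneg hA0.le]
    field_simp
  unfold pFlux
  rw [hg, hn, smul_smul]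
  congr 1
  have hAp : A ^ (p - 2) * A = (p * t)⁻¹ * ‖x‖ * b ^ ((p - 1) / (p - 2)) := by
    have e0 : A ^ (p - 2) * A = A ^ (p - 1) := by
      rw [← Real.rpow_add_one hA0.ne']; congr 1; ring
    have e : p - 1 ≠ 0 := by linarith
    rw [e0, hA, Real.mul_rpow (by positivity) (by positivity), Real.mul_rpow (by positivity)
      (by positivity), hK, ← Real.rpow_mul hpt.le, ← Real.rpow_mul hr.le, ← Real.rpow_mul hB.le]
    rw [show -(1 / (p - 1)) * (p - 1) = -1 by field_simp,
      show (1 / (p - 1)) * (p - 1) = 1 by field_simp, Real.rpow_one, Real.rpow_neg_one]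
    congr 2; ring
  calc A ^ (p - 2) * (-A * ‖x‖⁻¹) = -(A ^ (p - 2) * A) * ‖x‖⁻¹ := by ring
    _ = _ := by rw [hAp]; field_simp

lemma pLap_eq {n : ℕ} (p t ϱ : ℝ) (hp : 2 < p) (ht : 0 < t) (x : EuclideanSpace ℝ (Fin n))
    (hx : x ≠ 0) (hB : 0 < brk p ‖x‖ t) :
    pLaplacian p (fun y s => hbar p ϱ y s) x t =
      (p * t)⁻¹ * brk p ‖x‖ t ^ (1 / (p - 2)) *
        (‖x‖ ^ (p / (p - 1)) * (p * t) ^ (-(1 / (p - 1))) - n * brk p ‖x‖ t) := by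
  have hr : 0 < ‖x‖ := by simpa using hx
  have hd := (radial_fderiv _ _ x hx (brk_hasDerivAt_r p ‖x‖ t hp hr ht hB)).const_mul
    (-(p * t)⁻¹)
  have hd1 := hd.smul (hasFDerivAt_id x)
  have hd2 := hd1.congr_of_eventuallyEq
    (f₁ := fun y => pFlux p (fun y s => hbar p ϱ y s) y t) (by
    filter_upwards [ev_good p t hp x hx hB] with y hy
    exact flux_eq p t ϱ hp ht y hy.1 hy.2)
  unfold pLaplacian
  rw [hd2.fderiv]
  have e2 : (p - 1) / (p - 2) = 1 / (p - 2) + 1 := by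
    have : p - 2 ≠ 0 := by linarith
    field_simp; ring
  have e1 : p / (p - 1) = 1 / (p - 1) + 1 := by
    have : p - 1 ≠ 0 := by linarith
    field_simp; ring
  simp only [ContinuousLinearMap.toLinearMap_add, map_add, ContinuousLinearMap.toLinearMap_smul, map_smul]
  have t1 : LinearMap.trace ℝ (EuclideanSpace ℝ (Fin n))
      (ContinuousLinearMap.id ℝ (EuclideanSpace ℝ (Fin n))).toLinearMap = n := by
    simp
  have t2 (L : EuclideanSpace ℝ (Fin n) →L[ℝ] ℝ) : LinearMap.trace ℝ (EuclideanSpace ℝ (Fin n))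
      (L.smulRight x).toLinearMap = L x := by
    exact LinearMap.trace_smulRight _ _
  simp only [id]
  rw [t1, t2, e1, e2, Real.rpow_add_one hr.ne', Real.rpow_add_one hB.ne']
  simp
  field_simp
  ring

/-- the barrier `h` is a classical subsolution of the `p`-parabolic
equation in the annulus, for times `0 < t < T` where the bracket is positive. -/
theorem stmt0 (n : ℕ) (hn : 1 ≤ n) (p : ℝ) (hp : 2 < p) (a : ℝ) (ha : a ∈ Set.Ioo (0:ℝ) 1)
    (T ϱ₀ : ℝ)
    (hT : T = ((n : ℝ) ^ (p - 1) * p)⁻¹)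
    (hϱ : ϱ₀ = (min (a * p / ((n : ℝ) * (p - 2)) + 1) 2) ^ ((p - 1) / p))
    (x : EuclideanSpace ℝ (Fin n)) (t : ℝ)
    (hx1 : 1 < ‖x‖) (hx2 : ‖x‖ < ϱ₀) (ht0 : 0 < t) (htT : t < T)
    (hpos : 0 < 1 - (p - 2) / p ^ (p / (p - 1)) * ((‖x‖ ^ (p / (p - 1)) - 1) / t ^ (1 / (p - 1)))) :
    deriv (fun s => hbar p ϱ₀ x s) t ≤ pLaplacian p (fun y s => hbar p ϱ₀ y s) x t := by
  have hB : 0 < brk p ‖x‖ t := hpos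
  have hr : 0 < ‖x‖ := by linarith
  have hx : x ≠ 0 := by simpa using hr
  have hpt : 0 < p * t := by positivity
  have hn0 : (0:ℝ) < n := by exact_mod_cast hn
  have hq0 : 0 ≤ ‖x‖ ^ (p / (p - 1)) - 1 := by
    have := Real.one_le_rpow (z := p / (p - 1)) hx1.le (div_nonneg (by linarith) (by linarith))
    linarith
  have hB1 : brk p ‖x‖ t ≤ 1 := by
    have h3 : 0 ≤ (p - 2) / p ^ (p / (p - 1)) :=
      div_nonneg (by linarith) (Real.rpow_nonneg (by linarith) _)
    have : 0 ≤ (p - 2) / p ^ (p / (p - 1)) * ((‖x‖ ^ (p / (p - 1)) - 1) / t ^ (1 / (p - 1))) := by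
      positivity
    unfold brk
    linarith
  have hK : (n : ℝ) ≤ (p * t) ^ (-(1 / (p - 1))) := by
    have h1 : p * t ≤ (n : ℝ) ^ (-(p - 1)) := by
      rw [Real.rpow_neg hn0.le]
      calc p * t ≤ p * T := by gcongr
        _ = _ := by
          rw [hT]
          have : 0 < (n : ℝ) ^ (p - 1) := by positivity
          field_simp
    have h2 : ((n : ℝ) ^ (-(p - 1))) ^ (-(1 / (p - 1))) ≤ (p * t) ^ (-(1 / (p - 1))) :=
      Real.rpow_le_rpow_of_nonpos hpt h1 (by
        have : 0 ≤ 1 / (p - 1) := div_nonneg (by linarith) (by linarith)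
        linarith)
    rw [← Real.rpow_mul hn0.le] at h2
    have : p - 1 ≠ 0 := by linarith
    rwa [show -(p - 1) * -(1 / (p - 1)) = 1 by field_simp, Real.rpow_one] at h2
  have hDt := brk_hasDerivAt_t p ‖x‖ t hp ht0 hB
  have hDg : HasDerivAt (fun s => gbar p ‖x‖ s) _ t := hDt.congr_of_eventuallyEq (by
    have hc : ContinuousAt (fun s => brk p ‖x‖ s) t := by
      have h1 : ContinuousAt (fun s : ℝ => s ^ (1 / (p - 1))) t :=
        Real.continuousAt_rpow_const _ _ (Or.inl ht0.ne')
      have h2 : t ^ (1 / (p - 1)) ≠ 0 := by positivity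
      unfold brk
      fun_prop (disch := assumption)
    filter_upwards [hc.eventually (lt_mem_nhds hB)] with s hs
    exact gbar_eq _ _ _ hs)
  rw [pLap_eq p t ϱ₀ hp ht0 x hx hB]
  set K := (p * t) ^ (-(1 / (p - 1))) with hKdef
  set b := brk p ‖x‖ t with hb
  set R := ‖x‖ ^ (p / (p - 1)) with hR
  have key : b ^ (1 / (p - 2)) * (R - 1) * ((p * t)⁻¹ * K) ≤
      (p * t)⁻¹ * b ^ (1 / (p - 2)) * (R * K - n * b) := by
    have : (R - 1) * K ≤ R * K - n * b := by nlinarith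
    calc _ = (p * t)⁻¹ * b ^ (1 / (p - 2)) * ((R - 1) * K) := by ring
      _ ≤ _ := by gcongr
  refine le_trans ?_ key
  have hK0 : 0 < K := by positivity
  by_cases hdiff : DifferentiableAt ℝ (fun s => gbar p ϱ₀ s) t
  · have hd := (hDg.sub hdiff.hasDerivAt)
    have hnn : 0 ≤ deriv (fun s => gbar p ϱ₀ s) t := by
      rw [← derivWithin_of_mem_nhds (Ioi_mem_nhds ht0)]
      exact (gbar_mono p ϱ₀ hp (by linarith)).derivWithin_nonneg
    have : deriv (fun s => hbar p ϱ₀ x s) t = _ := hd.deriv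
    rw [this]
    linarith
  · have : ¬ DifferentiableAt ℝ (fun s => hbar p ϱ₀ x s) t := by
      intro h
      apply hdiff
      have := hDg.differentiableAt.sub h
      exact this.congr_of_eventuallyEq (Filter.Eventually.of_forall fun s => by simp [hbar])
    rw [deriv_zero_of_not_differentiableAt this]
    positivity
end

section
/- Let n ≥ 1 be an integer, p > 2, a ∈ (0,1), T = (n^{p−1}p)^{−1} and ϱ₀ = (min{ap/(n(p−2)) + 1, 2})^{(p−1)/p}. Then for every x ∈ ℝ^n with 1 ≤ |x| ≤ ϱ₀, the spatial gradient of h at time T satisfies |∇h(x,T)| ≥ n·exp(−n/p)·(1−a)^{n/p}. -/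
open Real Filter Set

/-- lower bound on the spatial gradient of the barrier `h` at time `T`. -/
theorem stmt1 (n : ℕ) (hn : 1 ≤ n) (p : ℝ) (hp : 2 < p) (a : ℝ) (ha : a ∈ Set.Ioo (0:ℝ) 1)
    (T ϱ₀ : ℝ)
    (hT : T = ((n : ℝ) ^ (p - 1) * p)⁻¹)
    (hϱ : ϱ₀ = (min (a * p / ((n : ℝ) * (p - 2)) + 1) 2) ^ ((p - 1) / p))
    (x : EuclideanSpace ℝ (Fin n)) (hx1 : 1 ≤ ‖x‖) (hx2 : ‖x‖ ≤ ϱ₀) :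
    ‖gradient (fun y => hbar p ϱ₀ y T) x‖ ≥
      (n : ℝ) * Real.exp (-((n : ℝ) / p)) * (1 - a) ^ ((n : ℝ) / p) := by
  obtain ⟨ha0, ha1⟩ := ha
  have hn1 : (1:ℝ) ≤ n := by exact_mod_cast hn
  have hn0 : (0:ℝ) < n := by linarith
  have hp0 : 0 < p := by linarith
  have hp1 : 0 < p - 1 := by linarith
  have hp2 : 0 < p - 2 := by linarith
  have hr0 : 0 < ‖x‖ := by linarith
  have hxne : x ≠ 0 := norm_pos_iff.mp hr0
  have hTpow : T ^ (1 / (p - 1)) = ((n : ℝ) * p ^ (1 / (p - 1)))⁻¹ := by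
    rw [hT, Real.inv_rpow (by positivity), Real.mul_rpow (by positivity) hp0.le,
      ← Real.rpow_mul hn0.le, mul_one_div_cancel hp1.ne', Real.rpow_one]
  have hpp : p ^ (p / (p - 1)) = p * p ^ (1 / (p - 1)) := by
    have : p / (p - 1) = 1 + 1 / (p - 1) := by field_simp; ring
    rw [this, Real.rpow_add hp0, Real.rpow_one]
  have hpos : 0 < p ^ (1 / (p - 1)) := Real.rpow_pos_of_pos hp0 _
  set c : ℝ := (p - 2) * n / p with hc
  have hc0 : 0 < c := by positivity
  have hg : ∀ r, gbar p r T = (max 0 (1 - c * (r ^ (p / (p - 1)) - 1))) ^ ((p - 1) / (p - 2)) := by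
    intro r
    have : (p - 2) / p ^ (p / (p - 1)) * ((r ^ (p / (p - 1)) - 1) / T ^ (1 / (p - 1)))
        = c * (r ^ (p / (p - 1)) - 1) := by
      rw [hTpow, hpp, hc]
      field_simp
    rw [gbar, this]
  -- bounds on s
  set s : ℝ := ‖x‖ ^ (p / (p - 1)) - 1 with hs
  have hs0 : 0 ≤ s := by
    have := Real.one_le_rpow hx1 (by positivity : 0 ≤ p / (p - 1))
    linarith
  have hsm : s + 1 ≤ min (a * p / ((n : ℝ) * (p - 2)) + 1) 2 := by
    have hm : 0 ≤ min (a * p / ((n : ℝ) * (p - 2)) + 1) 2 := by positivity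
    have h1 : ‖x‖ ^ (p / (p - 1)) ≤ ϱ₀ ^ (p / (p - 1)) :=
      Real.rpow_le_rpow hr0.le hx2 (by positivity)
    have h2 : (p - 1) / p * (p / (p - 1)) = 1 := by field_simp
    rw [hϱ, ← Real.rpow_mul hm, h2, Real.rpow_one] at h1
    linarith
  have hs1 : s ≤ 1 := by
    have := hsm.trans (min_le_right _ _)
    linarith
  have hcs : c * s ≤ a := by
    have h1 : s ≤ a * p / ((n : ℝ) * (p - 2)) := by
      have := hsm.trans (min_le_left _ _)
      linarith
    have h2 : c * (a * p / ((n : ℝ) * (p - 2))) = a := by rw [hc]; field_simp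
    calc c * s ≤ c * (a * p / ((n : ℝ) * (p - 2))) := by gcongr
      _ = a := h2
  set B : ℝ := 1 - c * s with hB
  have hB0 : 0 < B := by linarith
  -- derivative of the profile
  have hd1 : HasDerivAt (fun r : ℝ => 1 - c * (r ^ (p / (p - 1)) - 1))
      (-(c * (p / (p - 1) * ‖x‖ ^ (p / (p - 1) - 1)))) ‖x‖ := by
    have := (((Real.hasDerivAt_rpow_const (p := p / (p - 1)) (Or.inl hr0.ne')).sub_const 1).const_mul
      c).const_sub 1
    exact this
  have hd2 : HasDerivAt (fun r : ℝ => (1 - c * (r ^ (p / (p - 1)) - 1)) ^ ((p - 1) / (p - 2)))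
      (-(c * (p / (p - 1) * ‖x‖ ^ (p / (p - 1) - 1))) * ((p - 1) / (p - 2)) *
        B ^ ((p - 1) / (p - 2) - 1)) ‖x‖ :=
    hd1.rpow_const (Or.inl hB0.ne')
  set D : ℝ := -(c * (p / (p - 1) * ‖x‖ ^ (p / (p - 1) - 1))) * ((p - 1) / (p - 2)) *
        B ^ ((p - 1) / (p - 2) - 1) with hD
  have hd3 : HasDerivAt (fun r : ℝ => gbar p r T - gbar p ϱ₀ T) D ‖x‖ := by
    refine HasDerivAt.sub_const _ (hd2.congr_of_eventuallyEq ?_)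
    have hev := hd1.continuousAt.eventually (lt_mem_nhds hB0)
    filter_upwards [hev] with r hr
    rw [hg, max_eq_right hr.le]
  have hnd : DifferentiableAt ℝ (fun y : EuclideanSpace ℝ (Fin n) => ‖y‖) x :=
    (contDiffAt_norm ℝ hxne (n := 1)).differentiableAt (by norm_num)
  have hf : HasFDerivAt (fun y : EuclideanSpace ℝ (Fin n) => hbar p ϱ₀ y T)
      (D • fderiv ℝ (fun y : EuclideanSpace ℝ (Fin n) => ‖y‖) x) x :=
    hd3.comp_hasFDerivAt x hnd.hasFDerivAt
  haveI : Nontrivial (EuclideanSpace ℝ (Fin n)) := ⟨⟨x, 0, hxne⟩⟩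
  have hgn : ‖gradient (fun y => hbar p ϱ₀ y T) x‖ = |D| := by
    rw [gradient, LinearIsometryEquiv.norm_map, hf.fderiv, norm_smul, norm_fderiv_norm hnd,
      mul_one, Real.norm_eq_abs]
  have hDabs : |D| = n * ‖x‖ ^ (p / (p - 1) - 1) * B ^ (1 / (p - 2)) := by
    have e : (p - 1) / (p - 2) - 1 = 1 / (p - 2) := by field_simp; ring
    have hD' : D = -(n * ‖x‖ ^ (p / (p - 1) - 1) * B ^ (1 / (p - 2))) := by
      rw [hD, e, hc]
      generalize ‖x‖ ^ (p / (p - 1) - 1) = X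
      generalize B ^ (1 / (p - 2)) = Y
      field_simp
    rw [hD', abs_neg, abs_of_nonneg (by positivity)]
  have hX : 1 ≤ ‖x‖ ^ (p / (p - 1) - 1) := by
    apply Real.one_le_rpow hx1
    have : p / (p - 1) - 1 = 1 / (p - 1) := by field_simp; ring
    rw [this]; positivity
  -- logarithmic estimate
  have hlogB : B - 1 ≤ B * Real.log B := by
    have h := Real.one_sub_inv_le_log_of_pos hB0
    have h2 := mul_le_mul_of_nonneg_left h hB0.le
    rwa [mul_sub, mul_inv_cancel₀ hB0.ne', mul_one] at h2
  have h1a : 0 < 1 - a := by linarith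
  have hmono : Real.log (1 - a) ≤ Real.log B := Real.log_le_log h1a (by linarith)
  have hneg : Real.log (1 - a) ≤ 0 := Real.log_nonpos h1a.le (by linarith)
  have hcs0 : 0 ≤ c * s := by positivity
  have key1 : c * s * (-1 + Real.log (1 - a)) ≤ Real.log B := by
    have h := mul_le_mul_of_nonneg_left hmono hcs0
    have e : B * Real.log B = Real.log B - c * s * Real.log B := by rw [hB]; ring
    have : B - 1 = - (c * s) := by rw [hB]; ring
    nlinarith
  have key2 : c * (-1 + Real.log (1 - a)) ≤ Real.log B := by
    refine le_trans ?_ key1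
    have : c * s ≤ c := by nlinarith
    nlinarith
  have key3 : (n : ℝ) / p * (-1 + Real.log (1 - a)) ≤ Real.log B * (1 / (p - 2)) := by
    rw [mul_one_div, le_div_iff₀ hp2]
    calc _ = c * (-1 + Real.log (1 - a)) := by rw [hc]; ring
      _ ≤ _ := key2
  have key4 : Real.exp (-((n : ℝ) / p)) * (1 - a) ^ ((n : ℝ) / p) ≤ B ^ (1 / (p - 2)) := by
    rw [Real.rpow_def_of_pos h1a, Real.rpow_def_of_pos hB0, ← Real.exp_add]
    apply Real.exp_le_exp.mpr
    linarith
  rw [hgn, hDabs, ge_iff_le, mul_assoc, mul_assoc]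
  have hY : 0 ≤ B ^ (1 / (p - 2)) := by positivity
  exact mul_le_mul_of_nonneg_left (key4.trans (le_mul_of_one_le_left hY hX)) hn0.le
end

section
/- Fix an integer n ≥ 1, a ∈ (0,1), a point x ∈ ℝ^n and t > 0. For p > 2 let h_p(x,t) = g_p(|x|,t) − g_p(ϱ₀(p),t) denote the barrier with parameters depending on p. Then h_p(x,t) tends to exp(−(|x|² − 1)/(4t)) − exp(−1/(4t)) as p → 2⁺. -/
open Real Filter Set

lemma aux_lim (c : ℝ → ℝ) (C : ℝ) (hc : Tendsto c (nhdsWithin 2 (Ioi 2)) (nhds C)) :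
    Tendsto (fun p : ℝ => (max 0 (1 - (p - 2) * c p)) ^ ((p - 1) / (p - 2)))
      (nhdsWithin 2 (Ioi 2)) (nhds (Real.exp (-C))) := by
  have hid : Tendsto (fun p : ℝ => p) (nhdsWithin 2 (Ioi 2)) (nhds 2) :=
    tendsto_id.mono_left nhdsWithin_le_nhds
  have hp2 : ∀ᶠ p : ℝ in nhdsWithin 2 (Ioi 2), 2 < p := eventually_mem_nhdsWithin
  have hinv : Tendsto (fun y : ℝ => 2 + (y - 1)⁻¹) atTop (nhdsWithin 2 (Ioi 2)) := by
    refine tendsto_nhdsWithin_iff.2 ⟨?_, ?_⟩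
    · have h1 : Tendsto (fun y : ℝ => y - 1) atTop atTop :=
        tendsto_atTop_add_const_right _ (-1) tendsto_id
      simpa using (tendsto_inv_atTop_zero.comp h1).const_add 2
    · filter_upwards [eventually_gt_atTop 1] with y hy
      have : 0 < (y - 1)⁻¹ := inv_pos.2 (by linarith)
      simp only [mem_Ioi]
      linarith
  have hy : Tendsto (fun p : ℝ => (p - 1) / (p - 2)) (nhdsWithin 2 (Ioi 2)) atTop := by
    have h0 : Tendsto (fun p : ℝ => p - 2) (nhdsWithin 2 (Ioi 2)) (nhdsWithin 0 (Ioi 0)) := by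
      refine tendsto_nhdsWithin_iff.2 ⟨by simpa using hid.sub_const 2, ?_⟩
      filter_upwards [hp2] with p hp
      simp only [mem_Ioi]
      linarith
    have h1 := tendsto_atTop_add_const_left _ 1 (tendsto_inv_nhdsGT_zero.comp h0)
    refine h1.congr' ?_
    filter_upwards [hp2] with p hp
    have : p - 2 ≠ 0 := by linarith
    simp only [Function.comp]
    field_simp
    ring
  have hg : Tendsto (fun y : ℝ => y * (-((y - 1)⁻¹ * c (2 + (y - 1)⁻¹)))) atTop (nhds (-C)) := by
    have h1 : Tendsto (fun p : ℝ => -((p - 1) * c p)) (nhdsWithin 2 (Ioi 2)) (nhds (-C)) := by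
      have := ((hid.sub_const 1).mul hc).neg
      rwa [show ((2:ℝ) - 1) * C = C by ring] at this
    refine (h1.comp hinv).congr' ?_
    filter_upwards [eventually_gt_atTop 1] with y hy
    have : y - 1 ≠ 0 := by linarith
    simp only [Function.comp]
    have h3 : 2 + (y - 1)⁻¹ - 1 = y * (y - 1)⁻¹ := by
      field_simp
      ring
    rw [h3]
    ring
  have hmain := (Real.tendsto_one_add_rpow_exp_of_tendsto hg).comp hy
  refine hmain.congr' ?_
  have hpos : ∀ᶠ p : ℝ in nhdsWithin 2 (Ioi 2), 0 < 1 - (p - 2) * c p := by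
    have : Tendsto (fun p : ℝ => 1 - (p - 2) * c p) (nhdsWithin 2 (Ioi 2)) (nhds 1) := by
      simpa using ((hid.sub_const 2).mul hc).const_sub 1
    exact this.eventually_const_lt one_pos
  filter_upwards [hp2, hpos] with p hp hpp
  have h2 : p - 2 ≠ 0 := by linarith
  have h3 : ((p - 1) / (p - 2) - 1)⁻¹ = p - 2 := by
    have : (p - 1) / (p - 2) - 1 = (p - 2)⁻¹ := by
      field_simp
      ring
    rw [this, inv_inv]
  simp only [Function.comp]
  rw [h3, max_eq_right hpp.le, add_sub_cancel, ← sub_eq_add_neg]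

lemma aux_gbar (r : ℝ → ℝ) (R t : ℝ) (ht : 0 < t)
    (hr : Tendsto (fun p : ℝ => r p ^ (p / (p - 1))) (nhdsWithin 2 (Ioi 2)) (nhds R)) :
    Tendsto (fun p : ℝ => gbar p (r p) t) (nhdsWithin 2 (Ioi 2))
      (nhds (Real.exp (-((R - 1) / (4 * t))))) := by
  have hid : Tendsto (fun p : ℝ => p) (nhdsWithin 2 (Ioi 2)) (nhds 2) :=
    tendsto_id.mono_left nhdsWithin_le_nhds
  have he : Tendsto (fun p : ℝ => p / (p - 1)) (nhdsWithin 2 (Ioi 2)) (nhds 2) := by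
    have := hid.div (hid.sub_const 1) (by norm_num)
    norm_num at this
    exact this
  have he1 : Tendsto (fun p : ℝ => 1 / (p - 1)) (nhdsWithin 2 (Ioi 2)) (nhds 1) := by
    have := (tendsto_const_nhds (x := (1:ℝ))).div (hid.sub_const 1) (by norm_num)
    norm_num at this
    exact this
  have hP := hid.rpow he (Or.inl two_ne_zero)
  have hT := (tendsto_const_nhds (x := t)).rpow he1 (Or.inl ht.ne')
  have hc := (hP.inv₀ (by positivity)).mul ((hr.sub_const 1).div hT (by positivity))
  have := aux_lim _ _ hc
  have e : (2 ^ (2:ℝ) : ℝ)⁻¹ * ((R - 1) / t ^ (1:ℝ)) = (R - 1) / (4 * t) := by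
    rw [Real.rpow_one, Real.rpow_two]
    field_simp
    ring
  rw [e] at this
  refine this.congr fun p => ?_
  simp only [gbar, Pi.div_apply]
  rw [div_eq_mul_inv (p - 2) (p ^ (p / (p - 1))), mul_assoc]

/-- `h_p(x,t)` tends to `exp(-(|x|²-1)/(4t)) - exp(-1/(4t))` as `p → 2⁺`. -/
theorem stmt3 (n : ℕ) (hn : 1 ≤ n) (a : ℝ) (ha : a ∈ Set.Ioo (0:ℝ) 1)
    (x : EuclideanSpace ℝ (Fin n)) (t : ℝ) (ht : 0 < t) :
    Filter.Tendsto
      (fun p : ℝ => hbar p ((min (a * p / ((n : ℝ) * (p - 2)) + 1) 2) ^ ((p - 1) / p)) x t)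
      (nhdsWithin 2 (Set.Ioi 2))
      (nhds (Real.exp (-((‖x‖ ^ 2 - 1) / (4 * t))) - Real.exp (-(1 / (4 * t))))) := by
  have hid : Tendsto (fun p : ℝ => p) (nhdsWithin 2 (Ioi 2)) (nhds 2) :=
    tendsto_id.mono_left nhdsWithin_le_nhds
  have hp2 : ∀ᶠ p : ℝ in nhdsWithin 2 (Ioi 2), 2 < p := eventually_mem_nhdsWithin
  have he : Tendsto (fun p : ℝ => p / (p - 1)) (nhdsWithin 2 (Ioi 2)) (nhds 2) := by
    have := hid.div (hid.sub_const 1) (by norm_num)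
    norm_num at this
    exact this
  have hn0 : (0:ℝ) < n := by exact_mod_cast hn
  have ha0 : 0 < a := ha.1
  simp only [hbar]
  refine Tendsto.sub (aux_gbar (fun _ => ‖x‖) _ t ht ?_) ?_
  · have := (tendsto_const_nhds (x := ‖x‖)).rpow he (Or.inr two_pos)
    rwa [Real.rpow_two] at this
  · have e : (1:ℝ) / (4 * t) = (2 - 1) / (4 * t) := by norm_num
    rw [e]
    refine aux_gbar _ 2 t ht (tendsto_const_nhds.congr' ?_)
    have hs : ∀ᶠ p : ℝ in nhdsWithin 2 (Ioi 2), n * (p - 2) < a * p := by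
      have h1 : Tendsto (fun p : ℝ => n * (p - 2)) (nhdsWithin 2 (Ioi 2)) (nhds 0) := by
        simpa using (hid.sub_const 2).const_mul (n:ℝ)
      exact h1.eventually_lt (hid.const_mul a) (by positivity)
    filter_upwards [hp2, hs] with p hp hps
    have h1 : 1 < a * p / (n * (p - 2)) :=
      (one_lt_div (mul_pos hn0 (by linarith))).2 hps
    have hp0 : p ≠ 0 := by linarith
    have hp1 : p - 1 ≠ 0 := by linarith
    rw [min_eq_right (by linarith), ← Real.rpow_mul (by norm_num),
      show (p - 1) / p * (p / (p - 1)) = 1 by field_simp, Real.rpow_one]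
end

section
/- Let n ≥ 1 be an integer, p > 2, a ∈ (0,1), T = (n^{p−1}p)^{−1} and ϱ₀ = (min{ap/(n(p−2)) + 1, 2})^{(p−1)/p}. Then 1 − (n(p−2)/p)·(ϱ₀^{p/(p−1)} − 1) > 0, g(ϱ₀,T)^{1/(p−1)} = (1 − (n(p−2)/p)·(ϱ₀^{p/(p−1)} − 1))^{1/(p−2)}, and g(ϱ₀,T)^{1/(p−1)} ≥ exp(−n/p)·(1−a)^{n/p}. -/
open Real Filter Set

/-- positivity of the bracket at `(ϱ₀, T)` and the lower bound
`g(ϱ₀,T)^(1/(p-1)) ≥ exp(-n/p) (1-a)^(n/p)`. -/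
theorem stmt6 (n : ℕ) (hn : 1 ≤ n) (p : ℝ) (hp : 2 < p) (a : ℝ) (ha : a ∈ Set.Ioo (0:ℝ) 1)
    (T ϱ₀ : ℝ)
    (hT : T = ((n : ℝ) ^ (p - 1) * p)⁻¹)
    (hϱ : ϱ₀ = (min (a * p / ((n : ℝ) * (p - 2)) + 1) 2) ^ ((p - 1) / p)) :
    0 < 1 - (n : ℝ) * (p - 2) / p * (ϱ₀ ^ (p / (p - 1)) - 1) ∧
    gbar p ϱ₀ T ^ ((1:ℝ) / (p - 1))
      = (1 - (n : ℝ) * (p - 2) / p * (ϱ₀ ^ (p / (p - 1)) - 1)) ^ ((1:ℝ) / (p - 2)) ∧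
    gbar p ϱ₀ T ^ ((1:ℝ) / (p - 1)) ≥ Real.exp (-((n : ℝ) / p)) * (1 - a) ^ ((n : ℝ) / p) := by
  obtain ⟨ha0, ha1⟩ := ha
  have hn0 : (0:ℝ) < n := by exact_mod_cast hn
  have hp0 : 0 < p := by linarith
  have hp1 : 0 < p - 1 := by linarith
  have hp2 : 0 < p - 2 := by linarith
  set m : ℝ := min (a * p / ((n : ℝ) * (p - 2)) + 1) 2 with hm
  have hq : 0 < a * p / ((n : ℝ) * (p - 2)) := by positivity
  have hm1 : 1 < m := lt_min (by linarith) (by norm_num)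
  have hρ : ϱ₀ ^ (p / (p - 1)) = m := by
    rw [hϱ, ← Real.rpow_mul (by linarith)]
    have : (p - 1) / p * (p / (p - 1)) = 1 := by field_simp
    rw [this, Real.rpow_one]
  have hT1 : T ^ (1 / (p - 1)) = ((n : ℝ) * p ^ (1 / (p - 1)))⁻¹ := by
    rw [hT, Real.inv_rpow (by positivity), Real.mul_rpow (by positivity) hp0.le,
      ← Real.rpow_mul hn0.le]
    have : (p - 1) * (1 / (p - 1)) = 1 := by field_simp
    rw [this, Real.rpow_one]
  have hpp : p ^ (p / (p - 1)) = p * p ^ (1 / (p - 1)) := by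
    have : p / (p - 1) = 1 + 1 / (p - 1) := by field_simp; ring
    rw [this, Real.rpow_add hp0, Real.rpow_one]
  have hxa : (n : ℝ) * (p - 2) / p * (m - 1) ≤ a := by
    have h1 : m - 1 ≤ a * p / ((n : ℝ) * (p - 2)) := by
      have := min_le_left (a * p / ((n : ℝ) * (p - 2)) + 1) 2
      linarith
    calc (n : ℝ) * (p - 2) / p * (m - 1)
        ≤ (n : ℝ) * (p - 2) / p * (a * p / ((n : ℝ) * (p - 2))) := by gcongr
      _ = a := by field_simp
  have hxc : (n : ℝ) * (p - 2) / p * (m - 1) ≤ (n : ℝ) * (p - 2) / p := by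
    have h1 : m - 1 ≤ 1 := by
      have := min_le_right (a * p / ((n : ℝ) * (p - 2)) + 1) 2
      linarith
    calc (n : ℝ) * (p - 2) / p * (m - 1)
        ≤ (n : ℝ) * (p - 2) / p * 1 := by gcongr
      _ = _ := mul_one _
  have hg : gbar p ϱ₀ T ^ ((1:ℝ) / (p - 1))
      = (1 - (n : ℝ) * (p - 2) / p * (m - 1)) ^ ((1:ℝ) / (p - 2)) := by
    have hbr : (p - 2) / p ^ (p / (p - 1)) * ((m - 1) / T ^ (1 / (p - 1)))
        = (n : ℝ) * (p - 2) / p * (m - 1) := by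
      have hpos : 0 < p ^ (1 / (p - 1)) := by positivity
      rw [hT1, hpp]
      generalize p ^ (1 / (p - 1)) = z at hpos
      field_simp
    unfold gbar
    rw [hρ, hbr, max_eq_right (by linarith), ← Real.rpow_mul (by linarith)]
    congr 1
    field_simp
  rw [hg, hρ]
  set x : ℝ := (n : ℝ) * (p - 2) / p * (m - 1) with hx
  have hy : 0 < 1 - x := by linarith
  refine ⟨hy, rfl, ?_⟩
  have h1a : 0 < 1 - a := by linarith
  rw [ge_iff_le, Real.rpow_def_of_pos hy, Real.rpow_def_of_pos h1a, ← Real.exp_add,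
    Real.exp_le_exp]
  have hlog : Real.log (1 - a) ≤ Real.log (1 - x) := Real.log_le_log h1a (by linarith)
  have hlog0 : Real.log (1 - x) ≤ 0 := by
    have hx0 : 0 ≤ x := mul_nonneg (by positivity) (by linarith)
    exact Real.log_nonpos hy.le (by linarith)
  have hkey : -(Real.log (1 - x)) ≤ x * (1 - Real.log (1 - x)) := by
    have h := Real.one_sub_inv_le_log_of_pos hy
    have h2 := mul_le_mul_of_nonneg_left h hy.le
    have h3 : (1 - x) * (1 - (1 - x)⁻¹) = (1 - x) - 1 := by field_simp
    nlinarith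
  have h4 : -(Real.log (1 - x)) ≤ (n : ℝ) * (p - 2) / p * (1 - Real.log (1 - a)) := by
    refine hkey.trans (mul_le_mul hxc (by linarith) (by linarith) (by positivity))
  rw [mul_one_div, le_div_iff₀ hp2]
  have h5 : (-((n : ℝ) / p) + Real.log (1 - a) * ((n : ℝ) / p)) * (p - 2)
      = -((n : ℝ) * (p - 2) / p * (1 - Real.log (1 - a))) := by ring
  rw [h5]
  linarith
end

section
/- Let p > 2, n ≥ 1 an integer, T, H > 0 and 0 < k ≤ k₀ = min{(p−1)/n, T^{1/(p−1)} H^{(p−2)/(p−1)}}. Then h̃ is a classical supersolution of the p-parabolic equation in N = {(x,t) : 1 < |x| < 1+k, 0 < t < T}: for every (x,t) ∈ N one has ∂_t h̃(x,t) ≥ Δ_p h̃(x,t). -/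
open Real Filter Set

lemma aux_norm {n : ℕ} {y : EuclideanSpace ℝ (Fin n)} (hy : y ≠ 0) :
    HasFDerivAt (fun z : EuclideanSpace ℝ (Fin n) => ‖z‖) (‖y‖⁻¹ • innerSL ℝ y) y := by
  have h0 : ‖y‖ ≠ 0 := norm_ne_zero_iff.mpr hy
  have h1 := ((hasFDerivAt_id y).norm_sq).sqrt (by simpa using hy)
  have h2 : (fun z : EuclideanSpace ℝ (Fin n) => ‖z‖) = fun z => √(‖id z‖ ^ 2) := by
    funext z; simp
  rw [h2]
  refine h1.congr_fderiv ?_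
  ext v
  simp
  field_simp

lemma aux_grad {n : ℕ} (H T k t : ℝ) {y : EuclideanSpace ℝ (Fin n)} (hy : y ≠ 0) :
    spatialGrad (fun y s => htilde H T k y s) y t =
      (H * Real.exp 2 * Real.exp ((t - T) / T - (‖y‖ - 1) / k) / k * ‖y‖⁻¹) • y := by
  unfold spatialGrad htilde
  apply HasGradientAt.gradient
  rw [hasGradientAt_iff_hasFDerivAt]
  have h1 : HasDerivAt (fun r : ℝ => H * Real.exp 2 * (1 - Real.exp ((t - T) / T - (r - 1) / k)))
      (H * Real.exp 2 * (-(Real.exp ((t - T) / T - (‖y‖ - 1) / k) * (-(1 / k))))) ‖y‖ := by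
    exact (((((hasDerivAt_id _).sub_const 1).div_const k).const_sub _).exp.const_sub 1).const_mul _
  have h2 := h1.comp_hasFDerivAt y (aux_norm hy)
  refine h2.congr_fderiv ?_
  ext v
  simp
  ring

lemma aux_flux {n : ℕ} (p H T k t : ℝ) (hH : 0 < H) (hk : 0 < k)
    {y : EuclideanSpace ℝ (Fin n)} (hy : y ≠ 0) :
    pFlux p (fun y s => htilde H T k y s) y t =
      ((H * Real.exp 2 * Real.exp ((t - T) / T - (‖y‖ - 1) / k) / k) ^ (p - 1) * ‖y‖⁻¹) • y := by
  have h0 : 0 < ‖y‖ := norm_pos_iff.mpr hy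
  unfold pFlux
  rw [aux_grad H T k t hy]
  set a := H * Real.exp 2 * Real.exp ((t - T) / T - (‖y‖ - 1) / k) / k with ha
  have hap : 0 < a := by positivity
  have : ‖(a * ‖y‖⁻¹) • y‖ = a := by
    rw [norm_smul, Real.norm_of_nonneg (by positivity)]
    field_simp
  rw [this, smul_smul, ← mul_assoc, ← Real.rpow_add_one hap.ne']
  congr 3
  ring

lemma aux_plap {n : ℕ} (p H T k t : ℝ) (hH : 0 < H) (hk : 0 < k)
    {x : EuclideanSpace ℝ (Fin n)} (hx : x ≠ 0) :
    pLaplacian p (fun y s => htilde H T k y s) x t =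
      (H * Real.exp 2 * Real.exp ((t - T) / T - (‖x‖ - 1) / k) / k) ^ (p - 1) *
        ((n - 1) / ‖x‖ - (p - 1) / k) := by
  have h0 : 0 < ‖x‖ := norm_pos_iff.mpr hx
  unfold pLaplacian
  have he : (fun y => pFlux p (fun y s => htilde H T k y s) y t) =ᶠ[nhds x]
      fun y => ((H * Real.exp 2 * Real.exp ((t - T) / T - (‖y‖ - 1) / k) / k) ^ (p - 1)
        * ‖y‖⁻¹) • y := by
    filter_upwards [isOpen_ne.mem_nhds hx] with y hy
    exact aux_flux p H T k t hH hk hy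
  rw [he.fderiv_eq]
  set a := H * Real.exp 2 * Real.exp ((t - T) / T - (‖x‖ - 1) / k) / k with ha
  have hap : 0 < a := by positivity
  have h1 : HasDerivAt (fun r : ℝ => H * Real.exp 2 * Real.exp ((t - T) / T - (r - 1) / k) / k)
      (H * Real.exp 2 * (Real.exp ((t - T) / T - (‖x‖ - 1) / k) * (-(1 / k))) / k) ‖x‖ := by
    exact ((((((hasDerivAt_id _).sub_const 1).div_const k).const_sub _).exp).const_mul _).div_const _
  have h1' : HasDerivAt (fun r : ℝ => H * Real.exp 2 * Real.exp ((t - T) / T - (r - 1) / k) / k)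
      (-(a / k)) ‖x‖ := by
    convert h1 using 1
    rw [ha]; ring
  have h2 := (h1'.rpow_const (p := p - 1) (Or.inl hap.ne')).mul (hasDerivAt_inv h0.ne')
  have h3 := (h2.comp_hasFDerivAt x (aux_norm hx)).smul (hasFDerivAt_id x)
  have h4 := h3.fderiv
  erw [h4]
  simp only [← ha, Function.comp, Pi.mul_apply, id]
  rw [ContinuousLinearMap.toLinearMap_add, map_add]
  have e1 : a ^ (p - 1) = a ^ (p - 1 - 1) * a := by
    rw [← Real.rpow_add_one hap.ne']; congr 1; ring
  have e2 : ∀ (f : EuclideanSpace ℝ (Fin n) →L[ℝ] ℝ) (v : EuclideanSpace ℝ (Fin n)),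
      LinearMap.trace ℝ (EuclideanSpace ℝ (Fin n)) (f.smulRight v).toLinearMap = f v :=
    fun f v => LinearMap.trace_smulRight f.toLinearMap v
  rw [e2, ContinuousLinearMap.toLinearMap_smul, map_smul]
  have e3 : LinearMap.trace ℝ (EuclideanSpace ℝ (Fin n))
      (ContinuousLinearMap.id ℝ (EuclideanSpace ℝ (Fin n))).toLinearMap = n := by
    rw [ContinuousLinearMap.coe_id, LinearMap.trace_id]
    simp
  rw [e3]
  simp
  rw [e1]
  field_simp
  ring

/-- `h̃` is a classical supersolution of the `p`-parabolic equation in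
`N = {(x,t) : 1 < |x| < 1+k, 0 < t < T}` provided `0 < k ≤ k₀`. -/
theorem stmt8 (p : ℝ) (hp : 2 < p) (n : ℕ) (hn : 1 ≤ n) (T H k : ℝ)
    (hT : 0 < T) (hH : 0 < H) (hk0 : 0 < k)
    (hk : k ≤ min ((p - 1) / (n : ℝ)) (T ^ (1 / (p - 1)) * H ^ ((p - 2) / (p - 1))))
    (x : EuclideanSpace ℝ (Fin n)) (t : ℝ)
    (hx1 : 1 < ‖x‖) (hx2 : ‖x‖ < 1 + k) (ht0 : 0 < t) (htT : t < T) :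
    deriv (fun s => htilde H T k x s) t ≥ pLaplacian p (fun y s => htilde H T k y s) x t := by
  have hx : x ≠ 0 := by
    rintro rfl
    simp at hx1
    linarith
  rw [aux_plap p H T k t hH hk0 hx]
  set E := Real.exp ((t - T) / T - (‖x‖ - 1) / k) with hE
  have hd : deriv (fun s => htilde H T k x s) t = H * Real.exp 2 * (-(E * (1 / T))) := by
    unfold htilde
    exact (((((((hasDerivAt_id t).sub_const T).div_const T).sub_const _).exp).const_sub
      1).const_mul _).deriv
  rw [hd]
  obtain ⟨hk1, hk2⟩ := le_min_iff.mp hk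
  have hp1 : 0 < p - 1 := by linarith
  have hn1 : (1 : ℝ) ≤ n := by exact_mod_cast hn
  have hEp : 0 < E := Real.exp_pos _
  set b := H * Real.exp 2 * E with hb
  have hbp : 0 < b := by positivity
  have hbH : H ≤ b := by
    have : 1 ≤ Real.exp 2 * E := by
      rw [hE, ← Real.exp_add]
      apply Real.one_le_exp
      have h1 : -1 ≤ (t - T) / T := by rw [le_div_iff₀ hT]; linarith
      have h2 : (‖x‖ - 1) / k ≤ 1 := by rw [div_le_iff₀ hk0]; linarith
      linarith
    rw [hb, mul_assoc]
    nlinarith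
  have hkp : k ^ (p - 1) ≤ T * b ^ (p - 2) := by
    calc k ^ (p - 1) ≤ (T ^ (1 / (p - 1)) * H ^ ((p - 2) / (p - 1))) ^ (p - 1) :=
          Real.rpow_le_rpow hk0.le hk2 hp1.le
      _ = T * H ^ (p - 2) := by
          rw [Real.mul_rpow (by positivity) (by positivity), ← Real.rpow_mul hT.le,
            ← Real.rpow_mul hH.le, div_mul_cancel₀ _ hp1.ne', div_mul_cancel₀ _ hp1.ne',
            Real.rpow_one]
      _ ≤ T * b ^ (p - 2) := by
          apply mul_le_mul_of_nonneg_left _ hT.le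
          exact Real.rpow_le_rpow hH.le hbH (by linarith)
  have hc : 1 ≤ (p - 1) / k - (n - 1) / ‖x‖ := by
    have h1 : (n : ℝ) ≤ (p - 1) / k := by
      rw [le_div_iff₀ hk0]
      rw [le_div_iff₀ (by linarith)] at hk1
      linarith
    have h2 : ((n : ℝ) - 1) / ‖x‖ ≤ n - 1 := div_le_self (by linarith) hx1.le
    linarith
  have hm : b / T ≤ (b / k) ^ (p - 1) := by
    have e : b ^ (p - 1) = b ^ (p - 2) * b := by
      rw [← Real.rpow_add_one hbp.ne']; congr 1; ring
    rw [Real.div_rpow hbp.le hk0.le, div_le_div_iff₀ hT (by positivity), e]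
    nlinarith
  have hq : 0 < (b / k) ^ (p - 1) := by positivity
  have : H * Real.exp 2 * (-(E * (1 / T))) = -(b / T) := by rw [hb]; ring
  rw [this]
  nlinarith
end

section
/- Let p ≥ 2 be a real number, n ≥ 1, and let a, b ∈ ℝ^n (with the convention |0|^{p−2}·0 = 0). Then the monotonicity inequality ⟨|a|^{p−2}a − |b|^{p−2}b, a − b⟩ ≥ 2^{2−p}·|a − b|^{p} holds, where ⟨·,·⟩ is the Euclidean inner product and |·| the Euclidean norm on ℝ^n. -/
open Real Filter Set

open RealInnerProductSpace


lemma aux_split (q A : ℝ) (hq : 0 ≤ q) (hA : 0 ≤ A) : A ^ (q + 1) = A ^ q * A := by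
  rw [Real.rpow_add_of_nonneg hA hq zero_le_one, Real.rpow_one]

lemma aux_split2 (q A : ℝ) (hq : 0 ≤ q) (hA : 0 ≤ A) : A ^ (q + 2) = A ^ (q + 1) * A := by
  rw [← aux_split (q + 1) A (by linarith) hA]; congr 1; ring

lemma aux_sum (q A B : ℝ) (hq : 0 ≤ q) (hA : 0 ≤ A) (hB : 0 ≤ B) :
    (2:ℝ) ^ (-q) * (A + B) ^ (q + 2) ≤ (A ^ q * A + B ^ q * B) * (A + B) := by
  have h : (A + B) ^ (q + 1) ≤ (2:ℝ) ^ (q + 1 - 1) * (A ^ (q + 1) + B ^ (q + 1)) := by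
    have h0 := NNReal.rpow_add_le_mul_rpow_add_rpow ⟨A, hA⟩ ⟨B, hB⟩ (p := q + 1) (by linarith)
    exact_mod_cast h0
  rw [aux_split2 q _ hq (by positivity), ← mul_assoc]
  refine mul_le_mul_of_nonneg_right ?_ (by positivity)
  rw [← aux_split q A hq hA, ← aux_split q B hq hB]
  have h2 : (2:ℝ) ^ (-q) * 2 ^ (q + 1 - 1) = 1 := by
    rw [← Real.rpow_add (by norm_num)]; simp
  calc _ ≤ (2:ℝ) ^ (-q) * (2 ^ (q + 1 - 1) * (A ^ (q + 1) + B ^ (q + 1))) := by gcongr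
    _ = _ := by rw [← mul_assoc, h2, one_mul]

lemma aux_diff (q A B : ℝ) (hq : 0 ≤ q) (hB : 0 ≤ B) (hAB : B ≤ A) :
    (2:ℝ) ^ (-q) * (A - B) ^ (q + 2) ≤ (A ^ q * A - B ^ q * B) * (A - B) := by
  have hd : 0 ≤ A - B := by linarith
  have h := Real.add_rpow_le_rpow_add hd hB (p := q + 1) (by linarith)
  rw [aux_split2 q _ hq hd, ← mul_assoc]
  refine mul_le_mul_of_nonneg_right ?_ hd
  rw [← aux_split q A hq (hB.trans hAB), ← aux_split q B hq hB]
  rw [sub_add_cancel] at h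
  have h2 : (2:ℝ) ^ (-q) ≤ 1 := Real.rpow_le_one_of_one_le_of_nonpos (by norm_num) (by linarith)
  have h3 : 0 ≤ (A - B) ^ (q + 1) := by positivity
  nlinarith

lemma aux_sq (q x : ℝ) (hx : 0 ≤ x) : (x ^ 2) ^ ((q + 2) / 2) = x ^ (q + 2) := by
  rw [← Real.rpow_natCast, ← Real.rpow_mul hx]; congr 1; push_cast; ring

lemma aux_main (q A B D : ℝ) (hq : 0 ≤ q) (hB : 0 ≤ B) (hAB : B ≤ A) (hD : 0 ≤ D)
    (h1 : A - B ≤ D) (h2 : D ≤ A + B) :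
    (2:ℝ) ^ (-q) * D ^ (q + 2) ≤
      (A ^ q + B ^ q) / 2 * D ^ 2 + (A ^ q - B ^ q) * (A ^ 2 - B ^ 2) / 2 := by
  have hA := hB.trans hAB
  have hd : 0 ≤ A - B := by linarith
  have hc : ConvexOn ℝ (Set.Ici 0) (fun s : ℝ => (2:ℝ) ^ (-q) * s ^ ((q + 2) / 2)
      + (-((A ^ q + B ^ q) / 2) * s + -((A ^ q - B ^ q) * (A ^ 2 - B ^ 2) / 2))) := by
    refine ConvexOn.add ((convexOn_rpow (by linarith)).smul (by positivity)) ?_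
    refine ConvexOn.add ?_ (convexOn_const _ (convex_Ici 0))
    exact (LinearMap.mul ℝ ℝ (-((A ^ q + B ^ q) / 2))).convexOn (convex_Ici 0)
  have hm := hc.le_max_of_mem_Icc (x := (A - B) ^ 2) (y := (A + B) ^ 2) (z := D ^ 2)
    (Set.mem_Ici.2 (by positivity)) (Set.mem_Ici.2 (by positivity))
    ⟨by gcongr, by gcongr⟩
  simp only [aux_sq q _ hD, aux_sq q _ hd, aux_sq q (A + B) (by linarith)] at hm
  have e1 := aux_sum q A B hq hA hB
  have e2 := aux_diff q A B hq hB hAB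
  rcases le_max_iff.1 hm with h | h <;> nlinarith

/-- the monotonicity inequality
`⟨|a|^(p-2)a - |b|^(p-2)b, a-b⟩ ≥ 2^(2-p) |a-b|^p` for `p ≥ 2`. -/
theorem stmt14 (p : ℝ) (hp : 2 ≤ p) (n : ℕ) (hn : 1 ≤ n)
    (a b : EuclideanSpace ℝ (Fin n)) :
    ⟪‖a‖ ^ (p - 2) • a - ‖b‖ ^ (p - 2) • b, a - b⟫ ≥ (2:ℝ) ^ (2 - p) * ‖a - b‖ ^ p := by
  have key : ⟪‖a‖ ^ (p - 2) • a - ‖b‖ ^ (p - 2) • b, a - b⟫ =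
      (‖a‖ ^ (p - 2) + ‖b‖ ^ (p - 2)) / 2 * ‖a - b‖ ^ 2
        + (‖a‖ ^ (p - 2) - ‖b‖ ^ (p - 2)) * (‖a‖ ^ 2 - ‖b‖ ^ 2) / 2 := by
    rw [norm_sub_sq_real]
    simp only [inner_sub_left, inner_sub_right, real_inner_smul_left,
      real_inner_self_eq_norm_sq, real_inner_comm a b]
    ring
  rw [key, ge_iff_le]
  have t1 := norm_sub_norm_le a b
  have t2 := norm_sub_norm_le b a
  rw [norm_sub_rev b a] at t2
  have t3 := norm_sub_le a b
  have e1 : 2 - p = -(p - 2) := by ring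
  have e2 : ‖a - b‖ ^ p = ‖a - b‖ ^ (p - 2 + 2) := by rw [sub_add_cancel]
  rw [e1, e2]
  rcases le_total ‖b‖ ‖a‖ with h | h
  · exact aux_main (p - 2) _ _ _ (by linarith) (norm_nonneg _) h (norm_nonneg _) t1 t3
  · have := aux_main (p - 2) _ _ _ (by linarith) (norm_nonneg _) h (norm_nonneg (a - b)) t2
      (by linarith)
    linarith
end

section
/- Fix r ≥ 0 and t > 0. Then g_p(r,t) tends to exp(−(r² − 1)/(4t)) as p → 2⁺. -/
open Real Filter Set

/-- `g_p(r,t)` tends to `exp(-(r²-1)/(4t))` as `p → 2⁺`. -/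
theorem stmt17 (r t : ℝ) (hr : 0 ≤ r) (ht : 0 < t) :
    Filter.Tendsto (fun p : ℝ => gbar p r t) (nhdsWithin 2 (Set.Ioi 2))
      (nhds (Real.exp (-((r ^ 2 - 1) / (4 * t))))) := by
  have hr2 : ContinuousAt (fun p : ℝ => p / (p - 1)) 2 :=
    continuousAt_id.div (continuousAt_id.sub continuousAt_const) (by norm_num)
  have h1 : ContinuousAt (fun p : ℝ => 1 / (p - 1)) 2 :=
    continuousAt_const.div (continuousAt_id.sub continuousAt_const) (by norm_num)
  have hA : ContinuousAt (fun p : ℝ => p ^ (p / (p - 1))) 2 :=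
    continuousAt_id.rpow hr2 (Or.inl (by norm_num))
  have hB : ContinuousAt (fun p : ℝ => r ^ (p / (p - 1))) 2 :=
    continuousAt_const.rpow hr2 (Or.inr (by norm_num))
  have hC : ContinuousAt (fun p : ℝ => t ^ (1 / (p - 1))) 2 :=
    continuousAt_const.rpow h1 (Or.inl ht.ne')
  have hc : ContinuousAt (fun p : ℝ => -((p - 1) * (1 / p ^ (p / (p - 1)) *
      ((r ^ (p / (p - 1)) - 1) / t ^ (1 / (p - 1)))))) 2 := by
    refine ((continuousAt_id.sub continuousAt_const).mul
      ((continuousAt_const.div hA ?_).mul ((hB.sub continuousAt_const).div hC ?_))).neg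
    · positivity
    · positivity
  have hval : -(((2:ℝ) - 1) * (1 / (2:ℝ) ^ ((2:ℝ) / (2 - 1)) *
      ((r ^ ((2:ℝ) / (2 - 1)) - 1) / t ^ ((1:ℝ) / (2 - 1))))) = -((r ^ 2 - 1) / (4 * t)) := by
    have e : (2:ℝ) - 1 = 1 := by norm_num
    rw [e, div_one, div_one, rpow_one, rpow_two, rpow_two]
    field_simp
    ring
  have hlim := hc.tendsto
  simp only [hval] at hlim
  -- the change of variables `x = (p - 1) / (p - 2)`, `p = 2 + 1 / (x - 1)`
  have hx : Tendsto (fun p : ℝ => (p - 1) / (p - 2)) (nhdsWithin 2 (Ioi 2)) atTop := by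
    have h0 : Tendsto (fun p : ℝ => p - 2) (nhdsWithin 2 (Ioi 2)) (nhdsWithin 0 (Ioi 0)) := by
      refine tendsto_nhdsWithin_iff.2 ⟨?_, ?_⟩
      · have : ContinuousAt (fun p : ℝ => p - 2) 2 := by fun_prop
        have h := this.tendsto
        simp only [sub_self] at h
        exact h.mono_left nhdsWithin_le_nhds
      · filter_upwards [self_mem_nhdsWithin] with p hp
        exact sub_pos.2 (mem_Ioi.1 hp)
    refine ((tendsto_inv_nhdsGT_zero.comp h0).atTop_add tendsto_const_nhds (C := (1:ℝ))).congr' ?_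
    filter_upwards [self_mem_nhdsWithin] with p hp
    have : p - 2 ≠ 0 := (sub_pos.2 (mem_Ioi.1 hp)).ne'
    simp only [Function.comp]
    field_simp
    ring
  have hp : Tendsto (fun x : ℝ => 2 + 1 / (x - 1)) atTop (nhds 2) := by
    have : Tendsto (fun x : ℝ => x - 1) atTop atTop := tendsto_atTop_add_const_right _ _ tendsto_id
    simpa using (tendsto_inv_atTop_zero.comp this).const_add (2:ℝ)
  let G : ℝ → ℝ := fun p => -((p - 2) / p ^ (p / (p - 1)) *
    ((r ^ (p / (p - 1)) - 1) / t ^ (1 / (p - 1))))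
  have key := Real.tendsto_one_add_rpow_exp_of_tendsto (g := fun x => G (2 + 1 / (x - 1)))
    (t := -((r ^ 2 - 1) / (4 * t))) (by
      refine (hlim.comp hp).congr' ?_
      filter_upwards [eventually_gt_atTop 1] with x hx1
      have h : x - 1 ≠ 0 := (sub_pos.2 hx1).ne'
      simp only [Function.comp, G]
      have e1 : x * (2 + 1 / (x - 1) - 2) = 2 + 1 / (x - 1) - 1 := by
        field_simp
        ring
      rw [← e1]
      ring)
  have hG : Tendsto G (nhdsWithin 2 (Ioi 2)) (nhds 0) := by
    have : ContinuousAt G 2 := by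
      refine (((continuousAt_id.sub continuousAt_const).div hA ?_).mul
        ((hB.sub continuousAt_const).div hC ?_)).neg
      · positivity
      · positivity
    have h := this.tendsto
    have h2 : G 2 = 0 := by simp [G]
    rw [h2] at h
    exact h.mono_left nhdsWithin_le_nhds
  refine (key.comp hx).congr' ?_
  filter_upwards [self_mem_nhdsWithin, hG.eventually (lt_mem_nhds (show (-1:ℝ) < 0 by norm_num))]
    with p hp2 hGp
  have hne : p - 2 ≠ 0 := (sub_pos.2 (mem_Ioi.1 hp2)).ne'
  have e : 2 + 1 / ((p - 1) / (p - 2) - 1) = p := by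
    have : (p - 1) / (p - 2) - 1 = 1 / (p - 2) := by
      field_simp
      ring
    rw [this, one_div_one_div]
    ring
  simp only [Function.comp, e, gbar]
  rw [max_eq_right]
  · simp only [G, ← sub_eq_add_neg]
  · have : 0 ≤ 1 + G p := by linarith
    simpa only [G, ← sub_eq_add_neg] using this
end
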